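/- Let p be a prime and k ≥ 1 an integer. Then for μ-almost all α ∈ Q_p, the Ruban continued fraction algorithm applied to α does not terminate and there exist infinitely many indices i with v_p(a_i) ≤ −k, where (a_i) are the partial quotients of the Ruban expansion of α. Equivalently, the set of α ∈ Q_p whose Ruban expansion either terminates or satisfies v_p(a_i) ≥ −k + 1 for all but finitely many i is a μ-null set. -/

import Mathlib

/-!
On `pℤ_p`, where the norm is less than `1`, consider the set `E` of those `x` such that every partial
quotient of `x⁻¹` has norm less than `p ^ k`. A nonzero `x ∈ E` is `1 / (a + y)` with `y ∈ E` and
`a = ⌊x⁻¹⌋` of norm `p ^ j`, `1 ≤ j < k` (`exists_branch`), and the inverse branch `y ↦ 1 / (a + y)`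
scales distances on `pℤ_p` by exactly `p ^ (-2j)` (`ContractsBy.comp_branch`). There are
`(p - 1) p ^ j` possible `a` of norm `p ^ j`, so the contraction ratios add up to
`q = ∑ (p - 1) p ^ (-j) = 1 - p ^ (-(k - 1)) < 1` (`cylinderMass_succ`). Covering `E` by the
cylinders of length `n`, each contained in a ball of measure at most its contraction ratio
(`measure_ball_le`), gives `μ E ≤ q ^ n` for all `n`, hence `μ E = 0`; the same holds for every image
of `E` under a contraction (`measure_image_boundedTail_zero_le`). Only outer measure is involved, so
measurability of `E` is not needed.

If the partial quotients of norm at least `p ^ k` occur only finitely often in the expansion of `α`,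
then `α` lies in one of countably many images of `E` under compositions of inverse branches and a
translation, or in a countable set coming from `x = 0`; all of these are null
(`measure_image_boundedTail_eq_zero`). Termination needs no separate treatment: with `0⁻¹ = 0`, a
terminating expansion continues with zeros, so it has only finitely many large partial quotients.
-/

open scoped Classical
open MeasureTheory

/-- The `p`-adic valuation on `ℚ_[p]`, with `vp p 0 = ⊤` (i.e. `v_p(0) = +∞`). -/
noncomputable def vp (p : ℕ) [Fact p.Prime] (x : ℚ_[p]) : WithTop ℤ :=
  if x = 0 then ⊤ else (x.valuation : WithTop ℤ)

/-- `a ∈ ℤ[1/p]`, i.e. `a` is a rational whose denominator is a power of `p`. -/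
def InZinvp (p : ℕ) (a : ℚ) : Prop := ∃ n : ℕ, ∃ m : ℤ, a * (p : ℚ) ^ n = m

/-- `a` is the Ruban floor of `α`: `a ∈ ℤ[1/p] ∩ [0, p)` and `v_p(α - a) ≥ 1`. -/
def IsRubanFloor (p : ℕ) [Fact p.Prime] (α : ℚ_[p]) (a : ℚ) : Prop :=
  InZinvp p a ∧ 0 ≤ a ∧ a < p ∧ 1 ≤ vp p (α - (a : ℚ_[p]))

/-- The Ruban floor `⌊α⌋_p` of a `p`-adic number (it exists and is unique). -/
noncomputable def rubanFloor (p : ℕ) [Fact p.Prime] (α : ℚ_[p]) : ℚ :=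
  if h : ∃ a : ℚ, IsRubanFloor p α a then h.choose else 0

/-- The complete quotients of the Ruban continued fraction algorithm:
`α_0 = α`, `α_{n+1} = 1/(α_n - ⌊α_n⌋_p)`. -/
noncomputable def rubanCQ (p : ℕ) [Fact p.Prime] (α : ℚ_[p]) : ℕ → ℚ_[p]
  | 0 => α
  | n + 1 => (rubanCQ p α n - ((rubanFloor p (rubanCQ p α n) : ℚ) : ℚ_[p]))⁻¹

/-- The partial quotients of the Ruban continued fraction algorithm: `a_n = ⌊α_n⌋_p`. -/
noncomputable def rubanPQ (p : ℕ) [Fact p.Prime] (α : ℚ_[p]) (n : ℕ) : ℚ :=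
  rubanFloor p (rubanCQ p α n)

/-- The Ruban continued fraction algorithm applied to `α` does not terminate:
`α_n ≠ a_n` for all `n`. -/
def RubanInfinite (p : ℕ) [Fact p.Prime] (α : ℚ_[p]) : Prop :=
  ∀ n, rubanCQ p α n ≠ ((rubanPQ p α n : ℚ) : ℚ_[p])


section Ruban

variable {p : ℕ} [hp : Fact p.Prime]

lemma prime_cast_pos : (0 : ℝ) < p := by exact_mod_cast hp.1.pos

lemma one_lt_prime_cast : (1 : ℝ) < p := by exact_mod_cast hp.1.one_lt

lemma one_le_vp_iff (x : ℚ_[p]) : 1 ≤ vp p x ↔ ‖x‖ < 1 := by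
  by_cases hx : x = 0
  · simp [vp, hx]
  · rw [vp, if_neg hx, Padic.norm_eq_zpow_neg_valuation hx,
      zpow_lt_one_iff_right₀ one_lt_prime_cast]
    norm_cast
    omega

lemma vp_le_neg_iff (x : ℚ_[p]) (k : ℕ) :
    vp p x ≤ ((-(k : ℤ) : ℤ) : WithTop ℤ) ↔ (p : ℝ) ^ k ≤ ‖x‖ := by
  by_cases hx : x = 0
  · simp [vp, hx, hp.1.pos]
  · rw [vp, if_neg hx, Padic.norm_eq_zpow_neg_valuation hx, ← zpow_natCast,
      zpow_le_zpow_iff_right₀ one_lt_prime_cast, WithTop.coe_le_coe]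
    omega

lemma norm_le_inv_of_lt_one {x : ℚ_[p]} (hx : ‖x‖ < 1) : ‖x‖ ≤ (p : ℝ)⁻¹ := by
  have := (Padic.norm_lt_pow_iff_norm_le_pow_sub_one x 0).1 (by simpa using hx)
  simpa using this

/-! ### The Ruban floor -/

/-- Two Ruban floors of the same number differ by an element of `ℤ[1/p]` of real absolute value
less than `p` and of positive valuation, hence agree. -/
lemma IsRubanFloor.unique {α : ℚ_[p]} {a b : ℚ} (ha : IsRubanFloor p α a)
    (hb : IsRubanFloor p α b) : a = b := by
  obtain ⟨⟨n, s, hs⟩, ha0, hap, hav⟩ := ha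
  obtain ⟨⟨m, t, ht⟩, hb0, hbp, hbv⟩ := hb
  rw [one_le_vp_iff] at hav hbv
  have hpQ : (0 : ℚ) < p := by exact_mod_cast hp.1.pos
  have hd : ‖((a - b : ℚ) : ℚ_[p])‖ ≤ (p : ℝ)⁻¹ := by
    apply norm_le_inv_of_lt_one
    have : ((a - b : ℚ) : ℚ_[p]) = (α - b) - (α - a) := by push_cast; ring
    rw [this, sub_eq_add_neg]
    refine (Padic.nonarchimedean _ _).trans_lt (max_lt hbv ?_)
    rwa [norm_neg]
  -- clearing denominators turns `a - b` into an integer divisible by a larger power of `p`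
  obtain ⟨z, hz⟩ : ∃ z : ℤ, (a - b) * (p : ℚ) ^ (n + m) = z := by
    refine ⟨s * p ^ m - t * p ^ n, ?_⟩
    push_cast
    rw [← hs, ← ht]
    ring
  have hz' : ((a - b : ℚ) : ℚ_[p]) * (p : ℚ_[p]) ^ (n + m) = z := by exact_mod_cast hz
  have hzn : ‖(z : ℚ_[p])‖ ≤ (p : ℝ) ^ (-((n + m + 1 : ℕ) : ℤ)) := by
    rw [← hz', norm_mul, Padic.norm_p_pow]
    have : (p : ℝ) ^ (-((n + m + 1 : ℕ) : ℤ)) = (p : ℝ)⁻¹ * (p : ℝ) ^ (-((n + m : ℕ) : ℤ)) := by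
      rw [zpow_neg, zpow_neg, zpow_natCast, zpow_natCast, pow_succ, mul_inv, mul_comm]
    rw [this]
    gcongr
  rw [Padic.norm_int_le_pow_iff_dvd] at hzn
  have hzabs : |z| < (p : ℤ) ^ (n + m + 1) := by
    have : |(z : ℚ)| < (p : ℚ) ^ (n + m + 1) := by
      rw [← hz, abs_mul, abs_of_pos (pow_pos hpQ (n + m)), pow_succ, mul_comm]
      exact mul_lt_mul_of_pos_left (abs_lt.2 ⟨by linarith, by linarith⟩) (pow_pos hpQ _)
    exact_mod_cast this
  have hz0 : z = 0 := Int.eq_zero_of_abs_lt_dvd hzn hzabs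
  rw [hz0, Int.cast_zero, mul_eq_zero] at hz
  rcases hz with h | h
  · linarith
  · exact absurd h (pow_pos hpQ _).ne'

lemma rubanFloor_eq {α : ℚ_[p]} {a : ℚ} (ha : IsRubanFloor p α a) : rubanFloor p α = a := by
  have h : ∃ a : ℚ, IsRubanFloor p α a := ⟨a, ha⟩
  rw [rubanFloor, dif_pos h]
  exact h.choose_spec.unique ha

/-- The Ruban floor of a number of norm at most `p ^ j` is obtained by truncating the expansion of
`p ^ j * α ∈ ℤ_p` modulo `p ^ (j + 1)`. -/
lemma exists_isRubanFloor {α : ℚ_[p]} {j : ℕ} (hα : ‖α‖ ≤ (p : ℝ) ^ j) :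
    ∃ m : ℕ, m < p ^ (j + 1) ∧ IsRubanFloor p α ((m : ℚ) / (p : ℚ) ^ j) := by
  have hpQ : (0 : ℚ) < p := by exact_mod_cast hp.1.pos
  have hpp : (p : ℚ_[p]) ≠ 0 := by exact_mod_cast hp.1.ne_zero
  have hpR : (0 : ℝ) < p := prime_cast_pos
  have hz : ‖α * (p : ℚ_[p]) ^ j‖ ≤ 1 := by
    rw [norm_mul, Padic.norm_p_pow, zpow_neg, zpow_natCast, ← div_eq_mul_inv]
    exact div_le_one_of_le₀ hα (by positivity)
  set z : ℤ_[p] := ⟨α * (p : ℚ_[p]) ^ j, hz⟩ with hzdef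
  refine ⟨z.appr (j + 1), z.appr_lt _, ⟨j, z.appr (j + 1), ?_⟩, by positivity, ?_, ?_⟩
  · field_simp
    simp
  · rw [div_lt_iff₀ (by positivity), ← pow_succ']
    exact_mod_cast z.appr_lt _
  · rw [one_le_vp_iff]
    have h := (PadicInt.norm_le_pow_iff_mem_span_pow _ (j + 1)).2 (PadicInt.appr_spec (j + 1) z)
    rw [PadicInt.norm_def] at h
    have e : α - (((z.appr (j + 1) : ℚ) / (p : ℚ) ^ j : ℚ) : ℚ_[p])
        = ((z - (z.appr (j + 1) : ℤ_[p]) : ℤ_[p]) : ℚ_[p]) / (p : ℚ_[p]) ^ j := by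
      push_cast
      rw [hzdef]
      field_simp
    rw [e, norm_div, Padic.norm_p_pow, div_lt_one (by positivity)]
    exact h.trans_lt (zpow_lt_zpow_right₀ one_lt_prime_cast (by push_cast; omega))

lemma isRubanFloor_rubanFloor (α : ℚ_[p]) : IsRubanFloor p α (rubanFloor p α) := by
  obtain ⟨j, hj⟩ := pow_unbounded_of_one_lt ‖α‖ (one_lt_prime_cast (p := p))
  obtain ⟨m, -, hm⟩ := exists_isRubanFloor hj.le
  rwa [rubanFloor_eq hm]

lemma norm_sub_rubanFloor_lt_one (α : ℚ_[p]) : ‖α - (rubanFloor p α : ℚ_[p])‖ < 1 :=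
  (one_le_vp_iff _).1 (isRubanFloor_rubanFloor α).2.2.2

lemma rubanFloor_zero : rubanFloor p (0 : ℚ_[p]) = 0 :=
  rubanFloor_eq ⟨⟨0, 0, by simp⟩, le_rfl, by exact_mod_cast hp.1.pos, by simp [vp]⟩

/-! ### The shift on complete quotients -/

lemma rubanCQ_zero_left (n : ℕ) : rubanCQ p (0 : ℚ_[p]) n = 0 := by
  induction n with
  | zero => rfl
  | succ n ih => simp [rubanCQ, ih, rubanFloor_zero]

lemma rubanCQ_add (α : ℚ_[p]) (m n : ℕ) : rubanCQ p α (m + n) = rubanCQ p (rubanCQ p α m) n := by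
  induction n with
  | zero => rfl
  | succ n ih => rw [← add_assoc, rubanCQ, rubanCQ, ih]

lemma rubanPQ_add (α : ℚ_[p]) (m n : ℕ) : rubanPQ p α (m + n) = rubanPQ p (rubanCQ p α m) n := by
  rw [rubanPQ, rubanPQ, rubanCQ_add]

/-- After termination the junk value `0⁻¹ = 0` makes all further partial quotients vanish. -/
lemma rubanPQ_eq_zero_of_terminates {α : ℚ_[p]} {n : ℕ}
    (h : rubanCQ p α n = ((rubanPQ p α n : ℚ) : ℚ_[p])) {i : ℕ} (hi : n < i) :
    rubanPQ p α i = 0 := by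
  obtain ⟨d, rfl⟩ := Nat.exists_eq_add_of_le (Nat.succ_le_of_lt hi)
  have h0 : rubanCQ p α (n + 1) = 0 := by
    rw [rubanCQ]
    rw [rubanPQ] at h
    rw [← h, sub_self, inv_zero]
  rw [rubanPQ_add, h0, rubanPQ, rubanCQ_zero_left, rubanFloor_zero]


/-! ### Cylinders and inverse branches -/

/-- `ContractsBy φ m`: on `pℤ_p` the map `φ` is Lipschitz with constant `p ^ (-m)`. -/
def ContractsBy (φ : ℚ_[p] → ℚ_[p]) (m : ℕ) : Prop :=
  ∀ x y : ℚ_[p], ‖x‖ < 1 → ‖y‖ < 1 → ‖φ x - φ y‖ ≤ ((p : ℝ) ^ m)⁻¹ * ‖x - y‖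

/-- The elements `x` of `pℤ_p` such that all partial quotients of `x⁻¹` of index at least `N` have
norm less than `p ^ k`. Since `0⁻¹ = 0`, the expansions that terminate count as zero from there
on, so they are not excluded. -/
def boundedTail (p : ℕ) [Fact p.Prime] (k N : ℕ) : Set ℚ_[p] :=
  {x | ‖x‖ < 1 ∧ ∀ i, N ≤ i → ‖((rubanPQ p x⁻¹ i : ℚ) : ℚ_[p])‖ < (p : ℝ) ^ k}

/-- The numerators `m` of the partial quotients `m / p ^ j` of norm exactly `p ^ j`. -/
def numerators (p j : ℕ) : Finset ℕ := {m ∈ Finset.range (p ^ (j + 1)) | (p ^ (j + 1)).Coprime m}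

/-- The total measure of the cylinders in `pℤ_p` whose first partial quotient has norm less than
`p ^ k`; a partial quotient of norm `p ^ j` contributes `p ^ (-2j)`. -/
noncomputable def cylinderMass (p k : ℕ) : ℝ :=
  ∑ j ∈ Finset.Ico 1 k, ∑ _m ∈ numerators p j, ((p : ℝ) ^ (2 * j))⁻¹

lemma cylinderMass_nonneg (p k : ℕ) : 0 ≤ cylinderMass p k :=
  Finset.sum_nonneg fun _ _ => Finset.sum_nonneg fun _ _ => by positivity

lemma cylinderMass_succ (K : ℕ) : cylinderMass p (K + 1) = 1 - ((p : ℝ) ^ K)⁻¹ := by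
  have hpR : (0 : ℝ) < p := prime_cast_pos
  induction K with
  | zero => simp [cylinderMass]
  | succ K ih =>
    rw [cylinderMass, Finset.sum_Ico_succ_top (by omega), ← cylinderMass, ih, Finset.sum_const,
      numerators, ← Nat.totient_eq_card_coprime, Nat.totient_prime_pow_succ hp.1, nsmul_eq_mul,
      Nat.cast_mul, Nat.cast_pow, Nat.cast_sub hp.1.one_le, Nat.cast_one]
    field_simp
    ring

lemma cylinderMass_lt_one {k : ℕ} (hk : 1 ≤ k) : cylinderMass p k < 1 := by
  obtain ⟨K, rfl⟩ := Nat.exists_eq_add_of_le' hk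
  rw [cylinderMass_succ]
  have : 0 < ((p : ℝ) ^ K)⁻¹ := inv_pos.2 (pow_pos prime_cast_pos K)
  linarith

lemma norm_add_eq_of_lt_one {a : ℚ_[p]} {j : ℕ} (ha : ‖a‖ = (p : ℝ) ^ j) (hj : 1 ≤ j) {y : ℚ_[p]}
    (hy : ‖y‖ < 1) : ‖a + y‖ = (p : ℝ) ^ j := by
  have h1 : (1 : ℝ) < (p : ℝ) ^ j := one_lt_pow₀ one_lt_prime_cast (by omega)
  rw [Padic.add_eq_max_of_ne (by rw [ha]; exact (hy.trans h1).ne'), ha, max_eq_left (hy.trans h1).le]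

lemma norm_inv_add_lt_one {a : ℚ_[p]} {j : ℕ} (ha : ‖a‖ = (p : ℝ) ^ j) (hj : 1 ≤ j) {y : ℚ_[p]}
    (hy : ‖y‖ < 1) : ‖(a + y)⁻¹‖ < 1 := by
  rw [norm_inv, norm_add_eq_of_lt_one ha hj hy]
  exact inv_lt_one_of_one_lt₀ (one_lt_pow₀ one_lt_prime_cast (by omega))

/-- The inverse branch `y ↦ 1 / (a + y)` scales all distances in `pℤ_p` by `|a| ^ (-2)`. -/
lemma ContractsBy.comp_branch {φ : ℚ_[p] → ℚ_[p]} {m : ℕ} (hφ : ContractsBy φ m) {a : ℚ_[p]} {j : ℕ}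
    (ha : ‖a‖ = (p : ℝ) ^ j) (hj : 1 ≤ j) :
    ContractsBy (fun y => φ (a + y)⁻¹) (m + 2 * j) := by
  intro x y hx hy
  have hpR : (0 : ℝ) < p := prime_cast_pos
  refine (hφ _ _ (norm_inv_add_lt_one ha hj hx) (norm_inv_add_lt_one ha hj hy)).trans_eq ?_
  have hax := norm_add_eq_of_lt_one ha hj hx
  have hay := norm_add_eq_of_lt_one ha hj hy
  have hax0 : a + x ≠ 0 := norm_pos_iff.1 (by rw [hax]; positivity)
  have hay0 : a + y ≠ 0 := norm_pos_iff.1 (by rw [hay]; positivity)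
  have e : (a + x)⁻¹ - (a + y)⁻¹ = (y - x) / ((a + x) * (a + y)) := by
    field_simp
    ring
  rw [e, norm_div, norm_mul, hax, hay, norm_sub_rev y x]
  field_simp
  ring

lemma contractsBy_translation (a : ℚ_[p]) : ContractsBy (fun y => a + y) 0 := by
  intro x y _ _
  simp

/-- One step of the algorithm on `pℤ_p`: a nonzero `x` lies in the cylinder of the first partial
quotient `a = m / p ^ j` of `x⁻¹`, that is `x = 1 / (a + y)`, and `y⁻¹` has the shifted
expansion. -/
lemma exists_branch {x : ℚ_[p]} (hx : ‖x‖ < 1) (hx0 : x ≠ 0) :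
    ∃ j m : ℕ, 1 ≤ j ∧ m ∈ numerators p j ∧
      rubanPQ p x⁻¹ 0 = (m : ℚ) / (p : ℚ) ^ j ∧
      ‖(((m : ℚ) / (p : ℚ) ^ j : ℚ) : ℚ_[p])‖ = (p : ℝ) ^ j ∧
      ∃ y : ℚ_[p], ‖y‖ < 1 ∧ ((((m : ℚ) / (p : ℚ) ^ j : ℚ) : ℚ_[p]) + y)⁻¹ = x ∧
        ∀ i, rubanPQ p y⁻¹ i = rubanPQ p x⁻¹ (i + 1) := by
  have hpR : (0 : ℝ) < p := prime_cast_pos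
  obtain ⟨j, hj⟩ : ∃ j : ℕ, x.valuation = j := by
    have h := (one_le_vp_iff x).2 hx
    rw [vp, if_neg hx0] at h
    have h' : (1 : ℤ) ≤ x.valuation := by exact_mod_cast h
    exact ⟨x.valuation.toNat, by omega⟩
  have hxi : ‖x⁻¹‖ = (p : ℝ) ^ j := by
    rw [norm_inv, Padic.norm_eq_zpow_neg_valuation hx0, hj, zpow_neg, inv_inv, zpow_natCast]
  have hj1 : 1 ≤ j := by
    by_contra! h
    obtain rfl : j = 0 := by omega
    rw [norm_inv, pow_zero, inv_eq_one] at hxi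
    exact hx.ne hxi
  obtain ⟨m, hm, hfl⟩ := exists_isRubanFloor hxi.le
  have hfl' := rubanFloor_eq hfl
  have hy := norm_sub_rubanFloor_lt_one x⁻¹
  rw [hfl'] at hy
  set a : ℚ_[p] := (((m : ℚ) / (p : ℚ) ^ j : ℚ) : ℚ_[p]) with ha
  have han : ‖a‖ = (p : ℝ) ^ j := by
    have := norm_add_eq_of_lt_one hxi hj1 (y := -(x⁻¹ - a)) (by rwa [norm_neg])
    simpa using this
  refine ⟨j, m, hj1, ?_, hfl', han, x⁻¹ - a, hy, by rw [add_sub_cancel, inv_inv], fun i => ?_⟩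
  · rw [numerators, Finset.mem_filter, Finset.mem_range]
    refine ⟨hm, Nat.Coprime.pow_left _ ?_⟩
    rw [← Padic.norm_natCast_eq_one_iff]
    have : (m : ℚ_[p]) = a * (p : ℚ_[p]) ^ j := by
      have hpp : (p : ℚ_[p]) ≠ 0 := by exact_mod_cast hp.1.ne_zero
      rw [ha]
      push_cast
      field_simp
    rw [this, norm_mul, han, Padic.norm_p_pow, zpow_neg, zpow_natCast]
    field_simp
  · rw [add_comm i 1, rubanPQ_add]
    simp [rubanCQ, hfl', ha]

section Measure

variable [MeasurableSpace ℚ_[p]] [BorelSpace ℚ_[p]] (μ : Measure ℚ_[p]) [μ.IsAddHaarMeasure]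

/-! ### Measure estimates -/

/-- A ball of radius `p ^ (-(m + 1))` has measure at most `p ^ (-m)`, because `pℤ_p` contains `p ^ m`
disjoint translates of it. -/
lemma measure_ball_le (hμ : μ {x : ℚ_[p] | ‖x‖ < 1} = 1) (m : ℕ) (c : ℚ_[p]) :
    μ (Metric.closedBall c ((p : ℝ) ^ (-((m + 1 : ℕ) : ℤ)))) ≤ ENNReal.ofReal ((p : ℝ) ^ m)⁻¹ := by
  have hpR : (0 : ℝ) < p := prime_cast_pos
  set r : ℝ := (p : ℝ) ^ (-((m + 1 : ℕ) : ℤ)) with hr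
  have hr1 : r < 1 := by
    rw [hr, zpow_neg, zpow_natCast]
    exact inv_lt_one_of_one_lt₀ (one_lt_pow₀ one_lt_prime_cast (by omega))
  have htrans (d : ℚ_[p]) : μ (Metric.closedBall d r) = μ (Metric.closedBall c r) := by
    rw [Measure.addHaar_closedBall_center, Measure.addHaar_closedBall_center μ c]
  have hdisj : Set.PairwiseDisjoint (↑(Finset.range (p ^ m)))
      (fun i : ℕ => Metric.closedBall ((p : ℚ_[p]) * i) r) := by
    intro i hi i' hi' hne
    rw [Function.onFun, Set.disjoint_left]
    intro x hx hx'
    apply hne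
    rw [Metric.mem_closedBall, dist_eq_norm] at hx hx'
    have h1 : ‖(((p : ℤ) * ((i : ℤ) - i') : ℤ) : ℚ_[p])‖ ≤ r := by
      have e : (((p : ℤ) * ((i : ℤ) - i') : ℤ) : ℚ_[p])
          = (x - (p : ℚ_[p]) * i') + -(x - (p : ℚ_[p]) * i) := by push_cast; ring
      rw [e]
      refine (Padic.nonarchimedean _ _).trans (max_le hx' ?_)
      rwa [norm_neg]
    rw [hr, Padic.norm_int_le_pow_iff_dvd, pow_succ'] at h1
    have h2 := Int.dvd_of_mul_dvd_mul_left (by exact_mod_cast hp.1.ne_zero) h1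
    have hi1 : (i : ℤ) < (p : ℤ) ^ m := by exact_mod_cast Finset.mem_range.1 hi
    have hi2 : (i' : ℤ) < (p : ℤ) ^ m := by exact_mod_cast Finset.mem_range.1 hi'
    have h3 := Int.eq_zero_of_abs_lt_dvd h2 (abs_lt.2 ⟨by omega, by omega⟩)
    omega
  have hsub : (⋃ i ∈ Finset.range (p ^ m), Metric.closedBall ((p : ℚ_[p]) * (i : ℕ)) r)
      ⊆ {x : ℚ_[p] | ‖x‖ < 1} := by
    intro x hx
    simp only [Set.mem_iUnion] at hx
    obtain ⟨i, -, hx⟩ := hx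
    rw [Metric.mem_closedBall, dist_eq_norm] at hx
    have e : x = (x - (p : ℚ_[p]) * i) + (p : ℚ_[p]) * i := by ring
    rw [Set.mem_ofPred_eq, e]
    refine (Padic.nonarchimedean _ _).trans_lt (max_lt (hx.trans_lt hr1) ?_)
    have := (Padic.norm_intCast_lt_one_iff (p := p) (k := (p : ℤ) * i)).2 (dvd_mul_right _ _)
    simpa using this
  have hle := measure_mono (μ := μ) hsub
  rw [hμ, measure_biUnion_finset hdisj (fun _ _ => Metric.isClosed_closedBall.measurableSet)] at hle
  simp only [htrans, Finset.sum_const, Finset.card_range, nsmul_eq_mul] at hle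
  rw [ENNReal.ofReal_inv_of_pos (by positivity), ENNReal.ofReal_pow hpR.le, ENNReal.ofReal_natCast,
    ENNReal.le_inv_iff_mul_le, mul_comm]
  exact_mod_cast hle

/-- Iterating the covering of `boundedTail p k 0` by the admissible cylinders `n` times bounds the
outer measure of its image under a contraction by a multiple of `cylinderMass p k ^ n`. -/
lemma measure_image_boundedTail_zero_le (hμ : μ {x : ℚ_[p] | ‖x‖ < 1} = 1) (k n : ℕ) :
    ∀ (m : ℕ) (φ : ℚ_[p] → ℚ_[p]), ContractsBy φ m →
      μ (φ '' boundedTail p k 0) ≤ ENNReal.ofReal (((p : ℝ) ^ m)⁻¹ * cylinderMass p k ^ n) := by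
  have hpR : (0 : ℝ) < p := prime_cast_pos
  induction n with
  | zero =>
    intro m φ hφ
    rw [pow_zero, mul_one]
    refine (measure_mono ?_).trans (measure_ball_le μ hμ m (φ 0))
    rintro _ ⟨x, hx, rfl⟩
    rw [Metric.mem_closedBall, dist_eq_norm]
    refine (hφ x 0 hx.1 (by simp)).trans ?_
    rw [sub_zero, zpow_neg, zpow_natCast, pow_succ, mul_inv]
    gcongr
    exact norm_le_inv_of_lt_one hx.1
  | succ n ih =>
    intro m φ hφ
    have hcover : φ '' boundedTail p k 0 ⊆ {φ 0} ∪ ⋃ j ∈ Finset.Ico 1 k, ⋃ s ∈ numerators p j,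
        if ‖(((s : ℚ) / (p : ℚ) ^ j : ℚ) : ℚ_[p])‖ = (p : ℝ) ^ j then
          (fun y => φ ((((s : ℚ) / (p : ℚ) ^ j : ℚ) : ℚ_[p]) + y)⁻¹) '' boundedTail p k 0
        else ∅ := by
      rintro _ ⟨x, hx, rfl⟩
      by_cases hx0 : x = 0
      · left; simp [hx0]
      right
      obtain ⟨j, s, hj, hs, hPQ, ha, y, hy, hyx, hsh⟩ := exists_branch hx.1 hx0
      have hjk : j < k := by
        have := hx.2 0 le_rfl
        rw [hPQ, ha] at this
        exact (pow_lt_pow_iff_right₀ one_lt_prime_cast).1 this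
      simp only [Set.mem_iUnion]
      refine ⟨j, Finset.mem_Ico.2 ⟨hj, hjk⟩, s, hs, ?_⟩
      rw [if_pos ha]
      refine ⟨y, ⟨hy, fun i _ => ?_⟩, by simp only [hyx]⟩
      rw [hsh]
      exact hx.2 _ (Nat.zero_le _)
    calc μ (φ '' boundedTail p k 0)
        ≤ μ {φ 0} + ∑ j ∈ Finset.Ico 1 k, ∑ s ∈ numerators p j,
            ENNReal.ofReal (((p : ℝ) ^ (m + 2 * j))⁻¹ * cylinderMass p k ^ n) := by
          refine (measure_mono hcover).trans ((measure_union_le _ _).trans ?_)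
          gcongr
          refine (measure_biUnion_finset_le _ _).trans (Finset.sum_le_sum fun j hj => ?_)
          refine (measure_biUnion_finset_le _ _).trans (Finset.sum_le_sum fun s _ => ?_)
          split_ifs with ha
          · exact ih _ _ (hφ.comp_branch ha (Finset.mem_Ico.1 hj).1)
          · simp
      _ = ENNReal.ofReal (((p : ℝ) ^ m)⁻¹ * cylinderMass p k ^ (n + 1)) := by
          have hq := cylinderMass_nonneg p k
          rw [measure_singleton, zero_add]
          have h1 (j : ℕ) : ∑ s ∈ numerators p j,
              ENNReal.ofReal (((p : ℝ) ^ (m + 2 * j))⁻¹ * cylinderMass p k ^ n)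
              = ENNReal.ofReal (∑ s ∈ numerators p j,
                ((p : ℝ) ^ (m + 2 * j))⁻¹ * cylinderMass p k ^ n) :=
            (ENNReal.ofReal_sum_of_nonneg fun _ _ => by positivity).symm
          simp only [h1]
          rw [← ENNReal.ofReal_sum_of_nonneg
            (fun _ _ => Finset.sum_nonneg fun _ _ => by positivity)]
          congr 1
          rw [pow_succ' (cylinderMass p k) n]
          generalize cylinderMass p k ^ n = Q
          rw [cylinderMass]
          simp only [Finset.mul_sum, Finset.sum_mul, pow_add, mul_inv, mul_assoc]

/-- The index from which the partial quotients are bounded is lowered one step at a time; at each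
step there are countably many inverse branches. -/
lemma measure_image_boundedTail_eq_zero (hμ : μ {x : ℚ_[p] | ‖x‖ < 1} = 1) {k : ℕ} (hk : 1 ≤ k)
    (N : ℕ) : ∀ (m : ℕ) (φ : ℚ_[p] → ℚ_[p]), ContractsBy φ m → μ (φ '' boundedTail p k N) = 0 := by
  induction N with
  | zero =>
    intro m φ hφ
    have hlim : Filter.Tendsto
        (fun n : ℕ => ENNReal.ofReal (((p : ℝ) ^ m)⁻¹ * cylinderMass p k ^ n))
        Filter.atTop (nhds 0) := by
      have h := (tendsto_pow_atTop_nhds_zero_of_lt_one (cylinderMass_nonneg p k)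
        (cylinderMass_lt_one hk)).const_mul ((p : ℝ) ^ m)⁻¹
      rw [mul_zero] at h
      simpa using ENNReal.tendsto_ofReal h
    exact le_antisymm (ge_of_tendsto' hlim fun n =>
      measure_image_boundedTail_zero_le μ hμ k n m φ hφ) zero_le
  | succ N ih =>
    intro m φ hφ
    have hcover : φ '' boundedTail p k (N + 1) ⊆ {φ 0} ∪ ⋃ (j : ℕ) (a : ℚ),
        if 1 ≤ j ∧ ‖(a : ℚ_[p])‖ = (p : ℝ) ^ j then
          (fun y => φ ((a : ℚ_[p]) + y)⁻¹) '' boundedTail p k N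
        else ∅ := by
      rintro _ ⟨x, hx, rfl⟩
      by_cases hx0 : x = 0
      · left; simp [hx0]
      right
      obtain ⟨j, s, hj, -, -, ha, y, hy, hyx, hsh⟩ := exists_branch hx.1 hx0
      simp only [Set.mem_iUnion]
      refine ⟨j, (s : ℚ) / (p : ℚ) ^ j, ?_⟩
      rw [if_pos ⟨hj, ha⟩]
      refine ⟨y, ⟨hy, fun i hi => ?_⟩, by simp only [hyx]⟩
      rw [hsh]
      exact hx.2 _ (by omega)
    refine measure_mono_null hcover (measure_union_null (measure_singleton _) ?_)
    refine measure_iUnion_null fun j => measure_iUnion_null fun a => ?_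
    split_ifs with h
    · exact ih _ _ (hφ.comp_branch h.2 h.1)
    · simp

end Measure

end Ruban

/-- for `μ` the Haar measure on `ℚ_p` normalized by `μ(pℤ_p) = 1` and any
integer `k ≥ 1`, for `μ`-almost all `α ∈ ℚ_p` the Ruban continued fraction of `α` does
not terminate and there are infinitely many indices `i` with `v_p(a_i) ≤ -k`. -/
theorem stmt14 (p : ℕ) [Fact p.Prime] [MeasurableSpace ℚ_[p]] [BorelSpace ℚ_[p]]
    (μ : Measure ℚ_[p]) [μ.IsAddHaarMeasure]
    (hμ : μ {α : ℚ_[p] | 1 ≤ vp p α} = 1)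
    (k : ℤ) (hk : 1 ≤ k) :
    ∀ᵐ α ∂μ, RubanInfinite p α ∧
      {i : ℕ | vp p ((rubanPQ p α i : ℚ) : ℚ_[p]) ≤ ((-k : ℤ) : WithTop ℤ)}.Infinite := by

  have hμ' : μ {x : ℚ_[p] | ‖x‖ < 1} = 1 := by simpa only [one_le_vp_iff] using hμ
  lift k to ℕ using by omega
  have hk' : 1 ≤ k := by exact_mod_cast hk
  -- it suffices to cover the set where large partial quotients occur only finitely often
  have hnull : μ (⋃ (N : ℕ) (a : ℚ), (fun y => (a : ℚ_[p]) + y) '' boundedTail p k N) = 0 :=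
    measure_iUnion_null fun N => measure_iUnion_null fun a =>
      measure_image_boundedTail_eq_zero μ hμ' hk' N 0 _ (contractsBy_translation _)
  have hinf : ∀ᵐ α ∂μ,
      {i : ℕ | vp p ((rubanPQ p α i : ℚ) : ℚ_[p]) ≤ ((-k : ℤ) : WithTop ℤ)}.Infinite := by
    refine measure_mono_null ?_ hnull
    intro α hα
    have hfin := Set.not_infinite.1 hα
    obtain ⟨N, hN⟩ := hfin.bddAbove
    simp only [Set.mem_iUnion]
    refine ⟨N, rubanFloor p α, α - (rubanFloor p α : ℚ_[p]),
      ⟨norm_sub_rubanFloor_lt_one α, fun i hi => ?_⟩, by simp⟩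
    by_contra! hbig
    have hsh : rubanPQ p (α - (rubanFloor p α : ℚ_[p]))⁻¹ i = rubanPQ p α (1 + i) := by
      rw [rubanPQ_add]
      rfl
    rw [hsh, ← vp_le_neg_iff] at hbig
    have := hN hbig
    omega
  filter_upwards [hinf] with α hα
  refine ⟨fun n hn => hα ((Set.finite_Iic n).subset fun i hi => ?_), hα⟩
  -- past a termination index all partial quotients are `0`, whose valuation is `⊤`
  by_contra hni
  have h0 := rubanPQ_eq_zero_of_terminates hn (not_le.1 hni)
  simp [h0, vp] at hi
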